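/- arXiv:2602.24189 — 2 statements merged into one kernel-verified Lean document; each statement's English description precedes it below -/
import Mathlib

section
/- For α ∈ (0,1) and every Schwartz function φ on ℝ, ∫_ℝ C_{1,α} |x|^{−(1−α)} (𝓕φ)(x) dx = ∫_ℝ |ξ|^{−α} φ(ξ) dξ, where C_{1,α} = π^{−1/2} 2^{−α} Γ((1−α)/2)/Γ(α/2); that is, the Fourier transform of the Riesz kernel R_{1,α}(x) = C_{1,α}|x|^{−(1−α)}, taken in the sense of tempered distributions, is the function g(ξ) = |ξ|^{−α}. -/
open MeasureTheory Real

/-- The Fourier transform `(𝓕φ)(ξ) = ∫ e^{-iξx} φ(x) dx` of a real-valued function. -/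
noncomputable def fourierT (φ : ℝ → ℝ) (ξ : ℝ) : ℂ :=
  ∫ x : ℝ, Complex.exp (-(Complex.I * (ξ : ℂ) * (x : ℂ))) * (φ x : ℂ)

/-- The constant `C_{1,α} = π^{-1/2} 2^{-α} Γ((1-α)/2)/Γ(α/2)` of the Riesz kernel. -/
noncomputable def rieszConst (α : ℝ) : ℝ :=
  π ^ (-(1 / 2) : ℝ) * (2 : ℝ) ^ (-α) * (Gamma ((1 - α) / 2) / Gamma (α / 2))

/-!
Riemann's proof of the functional equation of `ζ`, with an integrable function in place of the
theta series. The Mellin transform of `t ↦ ∫ exp (-π t ‖x‖²) • f x` at `s / 2` is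
`π^(-s/2) Γ(s/2) ∫ ‖x‖^(-s) • f x`. Since the Fourier transform is self-adjoint and maps Gaussians
to Gaussians, replacing `f` by `𝓕 f` amounts to the substitution `t ↦ 1 / t` together with a factor
`t^(-d/2)`, hence to the reflection `s ↦ d - s` of the Mellin transform.
-/

open Set Module
open scoped FourierTransform

lemma integral_rpow_mul_exp_neg_pi_mul_sq {σ r : ℝ} (hσ : 0 < σ) (hr : 0 < r) :
    ∫ t in Ioi (0 : ℝ), t ^ (σ / 2 - 1) * exp (-(π * t * r ^ 2)) =
      π ^ (-σ / 2) * Gamma (σ / 2) * r ^ (-σ) := by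
  have hbase : (1 / (π * r ^ 2)) ^ (σ / 2) = π ^ (-σ / 2) * r ^ (-σ) := by
    rw [one_div, inv_rpow (by positivity), ← rpow_neg (by positivity),
      mul_rpow pi_nonneg (by positivity), ← rpow_natCast_mul hr.le]
    congr 2 <;> (push_cast; ring)
  have hGamma := integral_rpow_mul_exp_neg_mul_Ioi (half_pos hσ)
    (show 0 < π * r ^ 2 by positivity)
  rw [hbase] at hGamma
  calc ∫ t in Ioi (0 : ℝ), t ^ (σ / 2 - 1) * exp (-(π * t * r ^ 2))
      = ∫ t in Ioi (0 : ℝ), t ^ (σ / 2 - 1) * exp (-(π * r ^ 2 * t)) := by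
        simp only [mul_right_comm π]
    _ = π ^ (-σ / 2) * Gamma (σ / 2) * r ^ (-σ) := by rw [hGamma]; ring

lemma norm_cexp_neg_pi_mul_sq (t r : ℝ) :
    ‖Complex.exp (-(π * t * r ^ 2))‖ = exp (-(π * t * r ^ 2)) := by
  rw [Complex.norm_exp]
  norm_cast

lemma mellinConvergent_cexp_neg_pi_mul_sq {s : ℂ} {r : ℝ} (hs : 0 < s.re) (hr : 0 < r) :
    MellinConvergent (fun t : ℝ ↦ Complex.exp (-(π * t * r ^ 2))) (s / 2) := by
  have hmeas : AEStronglyMeasurable (fun t : ℝ ↦ Complex.exp (-(π * t * r ^ 2)))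
      (volume.restrict (Ioi 0)) := by fun_prop
  rw [MellinConvergent, mellin_convergent_iff_norm subset_rfl measurableSet_Ioi hmeas]
  simp only [norm_cexp_neg_pi_mul_sq, Complex.div_ofNat_re]
  refine Integrable.of_integral_ne_zero ?_
  rw [integral_rpow_mul_exp_neg_pi_mul_sq hs hr]
  have := Gamma_pos_of_pos (half_pos hs)
  positivity

lemma mellin_cexp_neg_pi_mul_sq {s : ℂ} {r : ℝ} (hs : 0 < s.re) (hr : 0 < r) :
    mellin (fun t : ℝ ↦ Complex.exp (-(π * t * r ^ 2))) (s / 2) =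
      s.Gammaℝ * (r : ℂ) ^ (-s) := by
  have hsq : ((r ^ 2 : ℝ) : ℂ) ^ (s / 2) = (r : ℂ) ^ s := by
    have := Complex.cpow_mul_ofReal_nonneg hr.le 2 (s / 2)
    push_cast at this
    rw [mul_div_cancel₀ s two_ne_zero] at this
    rw [this]
    norm_cast
  have hbase : (1 / ((π * r ^ 2 : ℝ) : ℂ)) ^ (s / 2) = (π : ℂ) ^ (-s / 2) * (r : ℂ) ^ (-s) := by
    have harg : ((π * r ^ 2 : ℝ) : ℂ).arg ≠ π := by
      rw [Complex.arg_ofReal_of_nonneg (by positivity)]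
      exact pi_ne_zero.symm
    rw [one_div, Complex.inv_cpow _ _ harg, Complex.ofReal_mul,
      Complex.mul_cpow_ofReal_nonneg pi_nonneg (by positivity), hsq, mul_inv, neg_div,
      Complex.cpow_neg, Complex.cpow_neg]
  have hGamma := Complex.integral_cpow_mul_exp_neg_mul_Ioi (a := s / 2)
    (by simpa using hs) (show 0 < π * r ^ 2 by positivity)
  rw [hbase] at hGamma
  calc mellin (fun t : ℝ ↦ Complex.exp (-(π * t * r ^ 2))) (s / 2)
      = ∫ t in Ioi (0 : ℝ), (t : ℂ) ^ (s / 2 - 1) *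
          Complex.exp (-(((π * r ^ 2 : ℝ) : ℂ) * t)) := by
        simp only [mellin, smul_eq_mul, Complex.ofReal_mul, Complex.ofReal_pow,
          mul_right_comm (π : ℂ)]
    _ = s.Gammaℝ * (r : ℂ) ^ (-s) := by rw [hGamma, Complex.Gammaℝ_def]; ring

section GaussianPairing

variable {V F : Type*} [NormedAddCommGroup V] [MeasurableSpace V]
  [NormedAddCommGroup F] [NormedSpace ℂ F]

/-- The pairing `t ↦ ∫ exp (-π t ‖x‖²) • f x ∂μ` of `f` with the Gaussians of all widths. -/
noncomputable def gaussianPairing (μ : Measure V) (f : V → F) (t : ℝ) : F :=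
  ∫ x, Complex.exp (-(π * t * ‖x‖ ^ 2)) • f x ∂μ

variable [OpensMeasurableSpace V] {μ : Measure V} [NullSingletonClass μ]

lemma integrable_prod_cpow_mul_gaussian_smul {s : ℂ} {f : V → F} (hs : 0 < s.re)
    (hf : AEStronglyMeasurable f μ) (hsf : Integrable (fun x ↦ ‖x‖ ^ (-s.re) • f x) μ) :
    Integrable (fun p : V × ℝ ↦
      ((p.2 : ℂ) ^ (s / 2 - 1) * Complex.exp (-(π * p.2 * ‖p.1‖ ^ 2))) • f p.1)
      (μ.prod (volume.restrict (Ioi 0))) := by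
  have hnorm (x : V) (hx : x ≠ 0) : ∫ t in Ioi (0 : ℝ),
      ‖((t : ℂ) ^ (s / 2 - 1) * Complex.exp (-(π * t * ‖x‖ ^ 2))) • f x‖ =
        π ^ (-s.re / 2) * Gamma (s.re / 2) * ‖‖x‖ ^ (-s.re) • f x‖ := by
    calc ∫ t in Ioi (0 : ℝ), ‖((t : ℂ) ^ (s / 2 - 1) * Complex.exp (-(π * t * ‖x‖ ^ 2))) • f x‖
        = ∫ t in Ioi (0 : ℝ), t ^ (s.re / 2 - 1) * exp (-(π * t * ‖x‖ ^ 2)) * ‖f x‖ := by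
          refine setIntegral_congr_fun measurableSet_Ioi fun t ht ↦ ?_
          simp [norm_smul, norm_cexp_neg_pi_mul_sq, Complex.norm_cpow_eq_rpow_re_of_pos ht]
      _ = π ^ (-s.re / 2) * Gamma (s.re / 2) * ‖‖x‖ ^ (-s.re) • f x‖ := by
          rw [integral_mul_const, integral_rpow_mul_exp_neg_pi_mul_sq hs (norm_pos_iff.2 hx),
            norm_smul, norm_of_nonneg (by positivity), mul_assoc]
  rw [integrable_prod_iff]
  · constructor
    · filter_upwards [μ.ae_ne 0] with x hx
      exact (mellinConvergent_cexp_neg_pi_mul_sq hs (norm_pos_iff.2 hx)).smul_const (f x)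
    · refine (hsf.norm.const_mul (π ^ (-s.re / 2) * Gamma (s.re / 2))).congr ?_
      filter_upwards [μ.ae_ne 0] with x hx using (hnorm x hx).symm
  · exact AEStronglyMeasurable.smul (Measurable.aestronglyMeasurable (by fun_prop)) hf.comp_fst

lemma mellin_gaussianPairing [SFinite μ] [CompleteSpace F] {s : ℂ} {f : V → F}
    (hs : 0 < s.re) (hf : AEStronglyMeasurable f μ)
    (hsf : Integrable (fun x ↦ ‖x‖ ^ (-s.re) • f x) μ) :
    mellin (gaussianPairing μ f) (s / 2) = s.Gammaℝ • ∫ x, (‖x‖ : ℂ) ^ (-s) • f x ∂μ := by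
  calc mellin (gaussianPairing μ f) (s / 2)
      = ∫ t in Ioi (0 : ℝ), ∫ x,
          ((t : ℂ) ^ (s / 2 - 1) * Complex.exp (-(π * t * ‖x‖ ^ 2))) • f x ∂μ := by
        simp only [mellin, gaussianPairing, mul_smul, integral_smul]
    _ = ∫ x, (∫ t in Ioi (0 : ℝ),
          ((t : ℂ) ^ (s / 2 - 1) * Complex.exp (-(π * t * ‖x‖ ^ 2))) • f x) ∂μ :=
        (integral_integral_swap (integrable_prod_cpow_mul_gaussian_smul hs hf hsf)).symm
    _ = ∫ x, s.Gammaℝ • (‖x‖ : ℂ) ^ (-s) • f x ∂μ := by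
        refine integral_congr_ae ?_
        filter_upwards [μ.ae_ne 0] with x hx
        rw [integral_smul_const, smul_smul, ← mellin_cexp_neg_pi_mul_sq hs (norm_pos_iff.2 hx)]
        simp only [mellin, smul_eq_mul]
    _ = s.Gammaℝ • ∫ x, (‖x‖ : ℂ) ^ (-s) • f x ∂μ := integral_smul _ _

end GaussianPairing

section Fourier

variable {V F : Type*} [NormedAddCommGroup V] [InnerProductSpace ℝ V] [FiniteDimensional ℝ V]
  [MeasurableSpace V] [BorelSpace V] [NormedAddCommGroup F] [NormedSpace ℂ F] [CompleteSpace F]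

lemma fourier_cexp_neg_pi_mul_norm_sq {t : ℝ} (ht : 0 < t) (w : V) :
    𝓕 (fun v : V ↦ Complex.exp (-(π * t * ‖v‖ ^ 2))) w =
      (t : ℂ) ^ (-(finrank ℝ V : ℂ) / 2) * Complex.exp (-(π * (t⁻¹ : ℝ) * ‖w‖ ^ 2)) := by
  have hre : 0 < (π * t : ℂ).re := by
    rw [← Complex.ofReal_mul, Complex.ofReal_re]
    positivity
  have ht' : (t : ℂ) ≠ 0 := Complex.ofReal_ne_zero.2 ht.ne'
  have hπ : (π : ℂ) ≠ 0 := Complex.ofReal_ne_zero.2 pi_ne_zero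
  have harg : (t : ℂ).arg ≠ π := by
    rw [Complex.arg_ofReal_of_nonneg ht.le]
    exact pi_ne_zero.symm
  have hdiv : (π : ℂ) / (π * t) = (t : ℂ)⁻¹ := by field_simp
  have hexp : -(π : ℂ) ^ 2 * ‖w‖ ^ 2 / (π * t) = -(π * (t⁻¹ : ℝ) * ‖w‖ ^ 2) := by
    push_cast
    field_simp
  simp only [← neg_mul (π * t : ℂ)]
  rw [fourier_gaussian_innerProductSpace hre, hdiv, hexp, Complex.inv_cpow _ _ harg, neg_div,
    Complex.cpow_neg]

lemma integrable_cexp_neg_pi_mul_norm_sq {t : ℝ} (ht : 0 < t) :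
    Integrable fun v : V ↦ Complex.exp (-(π * t * ‖v‖ ^ 2)) := by
  have hre : 0 < ((π * t : ℝ) : ℂ).re := by
    rw [Complex.ofReal_re]
    positivity
  simpa using GaussianFourier.integrable_cexp_neg_mul_sq_norm_add hre 0 (0 : V)

lemma gaussianPairing_fourier {f : V → F} (hf : Integrable f) {t : ℝ} (ht : 0 < t) :
    gaussianPairing volume (𝓕 f) t =
      (t : ℂ) ^ (-(finrank ℝ V : ℂ) / 2) • gaussianPairing volume f t⁻¹ := by
  calc gaussianPairing volume (𝓕 f) t
      = ∫ w : V, 𝓕 (fun v : V ↦ Complex.exp (-(π * t * ‖v‖ ^ 2))) w • f w := by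
        simpa using! (VectorFourier.integral_fourierIntegral_smul_eq_flip (L := innerₗ V)
          continuous_fourierChar continuous_inner (integrable_cexp_neg_pi_mul_norm_sq ht) hf).symm
    _ = (t : ℂ) ^ (-(finrank ℝ V : ℂ) / 2) • gaussianPairing volume f t⁻¹ := by
        simp only [fourier_cexp_neg_pi_mul_norm_sq ht, mul_smul, integral_smul, gaussianPairing]

lemma mellin_gaussianPairing_fourier {f : V → F} (hf : Integrable f) (s : ℂ) :
    mellin (gaussianPairing volume (𝓕 f)) ((finrank ℝ V - s) / 2) =
      mellin (gaussianPairing volume f) (s / 2) := by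
  calc mellin (gaussianPairing volume (𝓕 f)) ((finrank ℝ V - s) / 2)
      = mellin (fun t ↦ (t : ℂ) ^ (-(finrank ℝ V : ℂ) / 2) • gaussianPairing volume f t⁻¹)
          ((finrank ℝ V - s) / 2) := by
        refine setIntegral_congr_fun measurableSet_Ioi fun t ht ↦ ?_
        simp only [gaussianPairing_fourier hf ht]
    _ = mellin (gaussianPairing volume f) (s / 2) := by
        rw [mellin_cpow_smul, mellin_comp_inv]
        congr 1
        ring

theorem Gammaℝ_smul_integral_norm_cpow_smul_fourier {s : ℂ} {f : V → F}
    (hs₀ : 0 < s.re) (hs₁ : s.re < finrank ℝ V) (hf : Integrable f)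
    (hsf : Integrable fun x ↦ ‖x‖ ^ (-s.re) • f x)
    (hsFf : Integrable fun x ↦ ‖x‖ ^ (-(finrank ℝ V - s.re)) • 𝓕 f x) :
    (finrank ℝ V - s).Gammaℝ • ∫ x, (‖x‖ : ℂ) ^ (-(finrank ℝ V - s)) • 𝓕 f x =
      s.Gammaℝ • ∫ x, (‖x‖ : ℂ) ^ (-s) • f x := by
  have : Nontrivial V := Module.nontrivial_of_finrank_pos (R := ℝ) (by exact_mod_cast hs₀.trans hs₁)
  have hFf : Continuous (𝓕 f) :=
    VectorFourier.fourierIntegral_continuous continuous_fourierChar continuous_inner hf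
  rw [← mellin_gaussianPairing (by simpa using hs₁) hFf.aestronglyMeasurable (by simpa using hsFf),
    mellin_gaussianPairing_fourier hf, mellin_gaussianPairing hs₀ hf.aestronglyMeasurable hsf]

end Fourier

lemma integrable_norm_rpow_neg_smul {E F : Type*} [NormedAddCommGroup E] [NormedSpace ℝ E]
    [FiniteDimensional ℝ E] [MeasurableSpace E] [BorelSpace E] [NormedAddCommGroup F]
    [NormedSpace ℝ F] {μ : Measure E} [μ.IsAddHaarMeasure] {β C : ℝ} {f : E → F} (hβ₀ : 0 ≤ β)
    (hβ₁ : β < finrank ℝ E) (hf : Integrable f μ) (hC : ∀ x, ‖f x‖ ≤ C) :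
    Integrable (fun x ↦ ‖x‖ ^ (-β) • f x) μ := by
  have hnorm (x : E) : ‖‖x‖ ^ (-β)‖ = ‖x‖ ^ (-β) := norm_of_nonneg (by positivity)
  have hmeas : AEStronglyMeasurable (fun x : E ↦ ‖x‖ ^ (-β)) μ :=
    (measurable_norm.pow_const _).aestronglyMeasurable
  have hdim : 1 ≤ finrank ℝ E := by exact_mod_cast hβ₀.trans_lt hβ₁
  have hball : IntegrableOn (fun x : E ↦ ‖x‖ ^ (-β)) (Metric.ball 0 1) μ :=
    integrableOn_ball_of_norm_le_rpow hdim hβ₁ (C := 1) (by simp [hnorm]) hmeas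
  have hcompl : ∀ᵐ x ∂μ.restrict (Metric.ball 0 1)ᶜ, ‖‖x‖ ^ (-β)‖ ≤ 1 := by
    filter_upwards [ae_restrict_mem Metric.isOpen_ball.measurableSet.compl] with x hx
    have hx : 1 ≤ ‖x‖ := by simpa using hx
    rw [hnorm]
    exact rpow_le_one_of_one_le_of_nonpos hx (neg_nonpos.2 hβ₀)
  rw [← integrableOn_univ, ← union_compl_self (Metric.ball (0 : E) 1)]
  exact IntegrableOn.union (hball.smul_bdd C hf.1.restrict (.of_forall hC))
    (hf.integrableOn.bdd_smul 1 hmeas.restrict hcompl)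

lemma Gammaℝ_ofReal (x : ℝ) :
    (x : ℂ).Gammaℝ = ((π ^ (-x / 2) * Gamma (x / 2) : ℝ) : ℂ) := by
  rw [Complex.Gammaℝ_def, Complex.ofReal_mul, Complex.ofReal_cpow pi_nonneg, ← Complex.Gamma_ofReal]
  push_cast
  rfl

lemma rieszConst_mul_Gammaℝ {α : ℝ} (hα : 0 < α) :
    ((rieszConst α * (2 * π) ^ α : ℝ) : ℂ) * (α : ℂ).Gammaℝ = (1 - α : ℂ).Gammaℝ := by
  have hΓ := (Gamma_pos_of_pos (half_pos hα)).ne'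
  have hπ : π ^ (-(1 / 2) : ℝ) * π ^ α * π ^ (-α / 2) = π ^ (-(1 - α) / 2) := by
    rw [← rpow_add pi_pos, ← rpow_add pi_pos]
    ring_nf
  have htwo : (2 : ℝ) ^ (-α) * 2 ^ α = 1 := by
    rw [← rpow_add two_pos, neg_add_cancel, rpow_zero]
  rw [← Complex.ofReal_one, ← Complex.ofReal_sub, Gammaℝ_ofReal, Gammaℝ_ofReal,
    ← Complex.ofReal_mul, Complex.ofReal_inj]
  calc rieszConst α * (2 * π) ^ α * (π ^ (-α / 2) * Gamma (α / 2))
      = (π ^ (-(1 / 2) : ℝ) * π ^ α * π ^ (-α / 2)) * (2 ^ (-α) * 2 ^ α) *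
          Gamma ((1 - α) / 2) := by
        rw [rieszConst, mul_rpow two_pos.le pi_nonneg]
        field_simp
    _ = π ^ (-(1 - α) / 2) * Gamma ((1 - α) / 2) := by rw [hπ, htwo, mul_one]

lemma fourierT_eq_fourier (φ : ℝ → ℝ) (x : ℝ) :
    fourierT φ x = 𝓕 (fun y ↦ (φ y : ℂ)) (x / (2 * π)) := by
  rw [fourier_real_eq_integral_exp_smul, fourierT]
  congr with y
  rw [smul_eq_mul]
  congr 2
  push_cast
  field_simp

lemma abs_rpow_smul_fourierT (β : ℝ) (φ : ℝ → ℝ) (x : ℝ) :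
    |x| ^ (-β) • fourierT φ x =
      (2 * π) ^ (-β) • |x / (2 * π)| ^ (-β) • 𝓕 (fun y ↦ (φ y : ℂ)) (x / (2 * π)) := by
  rw [fourierT_eq_fourier, smul_smul, ← mul_rpow (by positivity) (by positivity), abs_div,
    abs_of_pos two_pi_pos, mul_div_cancel₀ _ two_pi_pos.ne']

lemma integrable_abs_rpow_smul_fourierT_iff {β : ℝ} {φ : ℝ → ℝ} :
    Integrable (fun x ↦ |x| ^ (-β) • fourierT φ x) ↔
      Integrable fun x ↦ |x| ^ (-β) • 𝓕 (fun y ↦ (φ y : ℂ)) x := by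
  simp only [abs_rpow_smul_fourierT]
  rw [integrable_fun_smul_iff (by positivity)]
  exact integrable_comp_div_iff (fun x ↦ |x| ^ (-β) • 𝓕 (fun y ↦ (φ y : ℂ)) x) two_pi_pos.ne'

lemma integral_abs_rpow_smul_fourierT (β : ℝ) (φ : ℝ → ℝ) :
    ∫ x, |x| ^ (-β) • fourierT φ x =
      (2 * π) ^ (1 - β) • ∫ x, |x| ^ (-β) • 𝓕 (fun y ↦ (φ y : ℂ)) x := by
  simp only [abs_rpow_smul_fourierT]
  rw [integral_smul,
    Measure.integral_comp_div (fun x ↦ |x| ^ (-β) • 𝓕 (fun y ↦ (φ y : ℂ)) x) (2 * π), smul_smul,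
    abs_of_pos two_pi_pos, sub_eq_neg_add, rpow_add_one two_pi_pos.ne']

lemma Gammaℝ_smul_integral_abs_rpow_smul_fourier {F : Type*} [NormedAddCommGroup F]
    [NormedSpace ℂ F] [CompleteSpace F] {α : ℝ} {f : ℝ → F} (hα₀ : 0 < α) (hα₁ : α < 1)
    (hf : Integrable f) (hαf : Integrable fun x ↦ |x| ^ (-α) • f x)
    (hαFf : Integrable fun x ↦ |x| ^ (-(1 - α)) • 𝓕 f x) :
    (1 - α : ℂ).Gammaℝ • ∫ x, |x| ^ (-(1 - α)) • 𝓕 f x =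
      (α : ℂ).Gammaℝ • ∫ x, |x| ^ (-α) • f x := by
  have hcast (β : ℝ) (g : ℝ → F) :
      ∫ x, (‖x‖ : ℂ) ^ (β : ℂ) • g x = ∫ x, |x| ^ β • g x := by
    simp only [norm_eq_abs, ← Complex.ofReal_cpow (abs_nonneg _), Complex.coe_smul]
  rw [← hcast, ← hcast]
  simpa using Gammaℝ_smul_integral_norm_cpow_smul_fourier (s := α) (by simpa) (by simpa) hf
    (by simpa) (by simpa using hαFf)

theorem stmt_5_general {α : ℝ} (hα1 : 0 < α) (hα2 : α < 1) {φ : ℝ → ℝ} (hφ : Integrable φ)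
    (hαφ : Integrable fun ξ ↦ |ξ| ^ (-α) * φ ξ)
    (hαFφ : Integrable fun x ↦ |x| ^ (-(1 - α)) • fourierT φ x) :
    (∫ x : ℝ, ((rieszConst α * |x| ^ (-(1 - α)) : ℝ) : ℂ) * fourierT φ x)
      = ((∫ ξ : ℝ, |ξ| ^ (-α) * φ ξ : ℝ) : ℂ) := by
  have hduality := Gammaℝ_smul_integral_abs_rpow_smul_fourier (f := fun y ↦ (φ y : ℂ)) hα1 hα2
    hφ.ofReal (by simpa using hαφ.ofReal (𝕜 := ℂ)) (integrable_abs_rpow_smul_fourierT_iff.1 hαFφ)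
  have hΓ : (α : ℂ).Gammaℝ ≠ 0 := Complex.Gammaℝ_ne_zero_of_re_pos (by simpa)
  refine mul_left_cancel₀ hΓ ?_
  calc (α : ℂ).Gammaℝ * ∫ x : ℝ, ((rieszConst α * |x| ^ (-(1 - α)) : ℝ) : ℂ) * fourierT φ x
      = (α : ℂ).Gammaℝ * (rieszConst α * ∫ x : ℝ, |x| ^ (-(1 - α)) • fourierT φ x) := by
        simp only [Complex.ofReal_mul, mul_assoc, integral_const_mul, Complex.real_smul]
    _ = (1 - α : ℂ).Gammaℝ * ∫ x : ℝ, |x| ^ (-(1 - α)) • 𝓕 (fun y ↦ (φ y : ℂ)) x := by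
        rw [integral_abs_rpow_smul_fourierT, sub_sub_cancel, ← rieszConst_mul_Gammaℝ hα1,
          Complex.real_smul]
        push_cast
        ring
    _ = (α : ℂ).Gammaℝ * ((∫ ξ : ℝ, |ξ| ^ (-α) * φ ξ : ℝ) : ℂ) := by
        rw [← smul_eq_mul, hduality, smul_eq_mul, ← integral_complex_ofReal]
        simp only [Complex.real_smul, Complex.ofReal_mul]

lemma integrable_norm_rpow_neg_smul_schwartzMap {E F : Type*} [NormedAddCommGroup E]
    [NormedSpace ℝ E] [FiniteDimensional ℝ E] [MeasurableSpace E] [BorelSpace E]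
    [NormedAddCommGroup F] [NormedSpace ℝ F] {μ : Measure E} [μ.IsAddHaarMeasure] {β : ℝ}
    (hβ₀ : 0 ≤ β) (hβ₁ : β < finrank ℝ E) (f : SchwartzMap E F) :
    Integrable (fun x ↦ ‖x‖ ^ (-β) • f x) μ :=
  integrable_norm_rpow_neg_smul hβ₀ hβ₁ f.integrable (SchwartzMap.norm_le_seminorm ℝ f)

lemma integrable_abs_rpow_smul_fourierT_schwartzMap {β : ℝ} (hβ₀ : 0 ≤ β) (hβ₁ : β < 1)
    (φ : SchwartzMap ℝ ℝ) : Integrable fun x ↦ |x| ^ (-β) • fourierT φ x :=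
  integrable_abs_rpow_smul_fourierT_iff.2 <|
    integrable_norm_rpow_neg_smul_schwartzMap hβ₀ (by simpa) (𝓕 (φ.postcompCLM Complex.ofRealCLM))

/-- The Fourier transform of the Riesz kernel `R_{1,α}(x) = C_{1,α}|x|^{-(1-α)}`, in the sense
of tempered distributions, is `g(ξ) = |ξ|^{-α}`: for every Schwartz function `φ`,
`∫ C_{1,α}|x|^{-(1-α)} (𝓕φ)(x) dx = ∫ |ξ|^{-α} φ(ξ) dξ`. -/
theorem stmt_5 (α : ℝ) (hα1 : 0 < α) (hα2 : α < 1) (φ : SchwartzMap ℝ ℝ) :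
    (∫ x : ℝ, ((rieszConst α * |x| ^ (-(1 - α)) : ℝ) : ℂ) * fourierT (fun y => φ y) x)
      = ((∫ ξ : ℝ, |ξ| ^ (-α) * φ ξ : ℝ) : ℂ) :=
  stmt_5_general hα1 hα2 φ.integrable
    (integrable_norm_rpow_neg_smul_schwartzMap hα1.le (by simpa) φ)
    (integrable_abs_rpow_smul_fourierT_schwartzMap (by linarith) (by linarith) φ)
end

section
/- Fix t > 0 and H ∈ (1/2, 1). For θ > 0 let I_θ(y) = ∫_{−θ}^{θ} G_t(x − y) dx, where G_t(x) = (1/2)·1_{{|x| ≤ t}}. Then for all θ > 0, w > 0, α_H ∫_ℝ ∫_ℝ I_θ(y) I_w(z) |y − z|^{2H−2} dy dz = 4 c_H ∫_ℝ sin²(tξ) sin(θξ) sin(wξ) |ξ|^{−3−2H} dξ, where α_H = H(2H−1) and c_H = Γ(2H+1) sin(πH)/(2π). -/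
open MeasureTheory Real

/-- The fundamental solution of the one-dimensional wave equation:
`G_t(x) = (1/2) 1_{{|x| ≤ t}}`. -/
noncomputable def waveG (t x : ℝ) : ℝ := if |x| ≤ t then 1 / 2 else 0

/-- `I_θ(y) = ∫_{-θ}^{θ} G_t(x - y) dx`. -/
noncomputable def Ifun (t θ y : ℝ) : ℝ := ∫ x in (-θ)..θ, waveG t (x - y)

/-!
Writing `Γ(α/2) (π r²)^(-α/2) = ∫₀^∞ s^(α/2-1) exp(-π r² s) ds` turns integrals against the Riesz
kernel `‖x‖^(-α)` into superpositions of integrals against Gaussians. Parseval's formula replaces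
the Gaussian of parameter `s` by that of parameter `1/s`, and the substitution `s ↦ 1/s` then turns
the kernel `‖x‖^(-α)` into `‖ξ‖^(α-d)` on the Fourier side. Applied to a correlation of two
functions this is Parseval's formula for Riesz energies. Since `I_θ` is twice the convolution of
`G_θ` with `G_t`, its Fourier transform is a product of two cardinal sines.
-/

open Set Module
open scoped FourierTransform Convolution

/-- The normalizing constant `π ^ (-s / 2) Γ(s / 2)` of the Riesz kernels, that is, the restriction
of `Complex.Gammaℝ` to real arguments. With this normalization `rieszGamma α * ‖x‖ ^ (-α)` and
`rieszGamma (d - α) * ‖ξ‖ ^ (α - d)` are Fourier transforms of each other in dimension `d`. -/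
noncomputable def rieszGamma (s : ℝ) : ℝ := π ^ (-s / 2) * Gamma (s / 2)

lemma rieszGamma_pos {s : ℝ} (hs : 0 < s) : 0 < rieszGamma s :=
  mul_pos (rpow_pos_of_pos pi_pos _) (Gamma_pos_of_pos (half_pos hs))

lemma ofReal_rieszGamma (s : ℝ) : (rieszGamma s : ℂ) = Complex.Gammaℝ s := by
  simp [rieszGamma, Complex.Gammaℝ_def, Complex.ofReal_cpow pi_pos.le, ← Complex.Gamma_ofReal]

lemma rieszGamma_eq_rieszGamma_one_sub_mul {s : ℝ} (hs : 0 < s) (hs1 : s < 1) :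
    rieszGamma s = rieszGamma (1 - s) * (2 * (2 * π) ^ (-s) * Gamma s * cos (π * s / 2)) := by
  have hpole (n : ℕ) : (s : ℂ) ≠ -(2 * n + 1) := by
    have hneg : -(2 * n + 1 : ℝ) < s := (neg_neg_of_pos (by positivity)).trans hs
    exact_mod_cast hneg.ne'
  have hdiv := Complex.Gammaℝ_div_Gammaℝ_one_sub hpole
  rw [← Complex.ofReal_one, ← Complex.ofReal_sub, ← ofReal_rieszGamma, ← ofReal_rieszGamma,
    Complex.Gammaℂ_def, Complex.Gamma_ofReal] at hdiv
  rw [mul_comm, ← div_eq_iff (rieszGamma_pos (sub_pos.2 hs1)).ne', ← Complex.ofReal_inj]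
  push_cast [hdiv, Complex.ofReal_cpow two_pi_pos.le]
  rfl

lemma mul_rieszGamma_two_mul_sub_one_eq_Gamma_mul_sin {H : ℝ} (hH : 1 / 2 < H) (hH1 : H < 1) :
    H * (2 * H - 1) * rieszGamma (2 * H - 1) * (2 * π) ^ (2 * H - 2) =
      Gamma (2 * H + 1) * sin (π * H) / (2 * π) * rieszGamma (2 - 2 * H) := by
  have hGamma : Gamma (2 * H + 1) = 2 * H * ((2 * H - 1) * Gamma (2 * H - 1)) := by
    rw [Gamma_add_one (by linarith), ← Gamma_add_one (s := 2 * H - 1) (by linarith),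
      sub_add_cancel]
  have hcos : cos (π * (2 * H - 1) / 2) = sin (π * H) := by
    rw [← cos_sub_pi_div_two]
    ring_nf
  have hpow : (2 * π) ^ (-(2 * H - 1)) * (2 * π) ^ (2 * H - 2) = (2 * π)⁻¹ := by
    rw [← rpow_add (by positivity), ← rpow_neg_one]
    ring_nf
  rw [rieszGamma_eq_rieszGamma_one_sub_mul (by linarith) (by linarith), hGamma, hcos,
    show 1 - (2 * H - 1) = 2 - 2 * H by ring]
  linear_combination (2 * H * (2 * H - 1) * rieszGamma (2 - 2 * H) * Gamma (2 * H - 1) *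
    sin (π * H)) * hpow

section Subordination

variable {α : ℝ}

lemma integral_rpow_mul_exp_neg_pi_mul_sq_mul {r : ℝ} (hα : 0 < α) (hr : 0 < r) :
    ∫ s in Ioi 0, s ^ (α / 2 - 1) * exp (-(π * r ^ 2 * s)) = rieszGamma α * r ^ (-α) := by
  rw [integral_rpow_mul_exp_neg_mul_Ioi (half_pos hα) (by positivity), rieszGamma, one_div,
    inv_rpow (by positivity), ← rpow_neg (by positivity), mul_rpow pi_pos.le (by positivity),
    ← rpow_natCast r 2, ← rpow_mul hr.le]
  push_cast
  ring_nf

lemma integrableOn_rpow_mul_exp_neg_pi_mul_sq_mul {r : ℝ} (hα : 0 < α) (hr : 0 < r) :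
    IntegrableOn (fun s ↦ s ^ (α / 2 - 1) * exp (-(π * r ^ 2 * s))) (Ioi 0) := by
  refine Integrable.of_integral_ne_zero ?_
  rw [integral_rpow_mul_exp_neg_pi_mul_sq_mul hα hr]
  exact (mul_pos (rieszGamma_pos hα) (rpow_pos_of_pos hr _)).ne'

variable {V E : Type*} [NormedAddCommGroup V] [MeasurableSpace V] [OpensMeasurableSpace V]
  {μ : Measure V} [NullSingletonClass μ]
  [NormedAddCommGroup E] [NormedSpace ℝ E] {F : V → E}

lemma integrable_prod_rpow_mul_exp_neg_smul (hα : 0 < α) (hF : AEStronglyMeasurable F μ)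
    (hint : Integrable (fun x ↦ ‖x‖ ^ (-α) • F x) μ) :
    Integrable (fun p : V × ℝ ↦ (p.2 ^ (α / 2 - 1) * exp (-(π * ‖p.1‖ ^ 2 * p.2))) • F p.1)
      (μ.prod (volume.restrict (Ioi 0))) := by
  have hmeas : AEStronglyMeasurable
      (fun p : V × ℝ ↦ (p.2 ^ (α / 2 - 1) * exp (-(π * ‖p.1‖ ^ 2 * p.2))) • F p.1)
      (μ.prod (volume.restrict (Ioi 0))) :=
    (by fun_prop : Measurable fun p : V × ℝ ↦
      p.2 ^ (α / 2 - 1) * exp (-(π * ‖p.1‖ ^ 2 * p.2))).aestronglyMeasurable.smul hF.comp_fst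
  refine (integrable_prod_iff hmeas).2 ⟨?_, ?_⟩
  · filter_upwards [Measure.ae_ne μ 0] with x hx
    exact (integrableOn_rpow_mul_exp_neg_pi_mul_sq_mul hα (norm_pos_iff.2 hx)).smul_const (F x)
  · refine (hint.norm.const_mul (rieszGamma α)).congr ?_
    filter_upwards [Measure.ae_ne μ 0] with x hx
    calc rieszGamma α * ‖‖x‖ ^ (-α) • F x‖
        = (∫ s in Ioi (0 : ℝ), s ^ (α / 2 - 1) * exp (-(π * ‖x‖ ^ 2 * s))) * ‖F x‖ := by
          rw [integral_rpow_mul_exp_neg_pi_mul_sq_mul hα (norm_pos_iff.2 hx), norm_smul,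
            norm_of_nonneg (by positivity), mul_assoc]
      _ = ∫ s in Ioi (0 : ℝ), ‖(s ^ (α / 2 - 1) * exp (-(π * ‖x‖ ^ 2 * s))) • F x‖ := by
          rw [← integral_mul_const]
          refine setIntegral_congr_fun measurableSet_Ioi fun s (hs : 0 < s) ↦ ?_
          simp only [norm_smul]
          rw [norm_of_nonneg (by positivity)]

theorem rieszGamma_smul_integral_rpow_norm_smul [SFinite μ] [CompleteSpace E] (hα : 0 < α)
    (hF : AEStronglyMeasurable F μ)
    (hint : Integrable (fun x ↦ ‖x‖ ^ (-α) • F x) μ) :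
    rieszGamma α • ∫ x, ‖x‖ ^ (-α) • F x ∂μ =
      ∫ s in Ioi (0 : ℝ), s ^ (α / 2 - 1) • ∫ x, exp (-(π * ‖x‖ ^ 2 * s)) • F x ∂μ := by
  calc rieszGamma α • ∫ x, ‖x‖ ^ (-α) • F x ∂μ
      = ∫ x, (∫ s in Ioi (0 : ℝ), (s ^ (α / 2 - 1) * exp (-(π * ‖x‖ ^ 2 * s))) • F x) ∂μ := by
        rw [← integral_smul]
        refine integral_congr_ae ?_
        filter_upwards [Measure.ae_ne μ 0] with x hx
        rw [integral_smul_const, integral_rpow_mul_exp_neg_pi_mul_sq_mul hα (norm_pos_iff.2 hx),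
          smul_smul]
    _ = ∫ s in Ioi (0 : ℝ), ∫ x, (s ^ (α / 2 - 1) * exp (-(π * ‖x‖ ^ 2 * s))) • F x ∂μ :=
        integral_integral_swap (integrable_prod_rpow_mul_exp_neg_smul hα hF hint)
    _ = ∫ s in Ioi (0 : ℝ), s ^ (α / 2 - 1) • ∫ x, exp (-(π * ‖x‖ ^ 2 * s)) • F x ∂μ := by
        simp only [mul_smul, integral_smul]

end Subordination

section Riesz

variable {V E : Type*} [NormedAddCommGroup V] [InnerProductSpace ℝ V] [FiniteDimensional ℝ V]
  [MeasurableSpace V] [BorelSpace V] [NormedAddCommGroup E] [NormedSpace ℂ E] [CompleteSpace E]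
  {h : V → E} {s α : ℝ}

theorem integral_gaussian_smul_eq_fourier (hs : 0 < s) (hh : Integrable h) :
    ∫ x, exp (-(π * ‖x‖ ^ 2 * s)) • h x =
      s ^ (-(finrank ℝ V : ℝ) / 2) • ∫ ξ, exp (-(π * ‖ξ‖ ^ 2 * s⁻¹)) • 𝓕 h ξ := by
  set b : ℂ := π * (s⁻¹ : ℝ) with hb
  have hb_re : 0 < b.re := by
    rw [hb, ← Complex.ofReal_mul, Complex.ofReal_re]
    positivity
  have hgauss : Integrable (fun v : V ↦ Complex.exp (-b * ‖v‖ ^ 2)) := by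
    simpa using GaussianFourier.integrable_cexp_neg_mul_sq_norm_add hb_re 0 (0 : V)
  have hflip : ∫ x, 𝓕 (fun v : V ↦ Complex.exp (-b * ‖v‖ ^ 2)) x • h x =
      ∫ ξ, Complex.exp (-b * ‖ξ‖ ^ 2) • 𝓕 h ξ := by
    simpa using! VectorFourier.integral_fourierIntegral_smul_eq_flip (L := innerₗ V)
      Real.continuous_fourierChar continuous_inner hgauss hh
  have htransform (x : V) : 𝓕 (fun v : V ↦ Complex.exp (-b * ‖v‖ ^ 2)) x =
      (s ^ ((finrank ℝ V : ℝ) / 2) * exp (-(π * ‖x‖ ^ 2 * s)) : ℝ) := by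
    rw [fourier_gaussian_innerProductSpace hb_re, hb]
    push_cast [Complex.ofReal_cpow hs.le]
    congr 2 <;> field_simp
  have hexp (ξ : V) : Complex.exp (-b * ‖ξ‖ ^ 2) = (exp (-(π * ‖ξ‖ ^ 2 * s⁻¹)) : ℝ) := by
    rw [hb]
    push_cast
    ring_nf
  simp only [htransform, Complex.coe_smul, mul_smul, integral_smul] at hflip
  simp only [hexp, Complex.coe_smul] at hflip
  rw [← hflip, smul_smul, ← rpow_add hs, neg_div, neg_add_cancel, rpow_zero, one_smul]

theorem rieszGamma_smul_integral_rpow_norm_smul_eq_fourier (hα : 0 < α) (hαd : α < finrank ℝ V)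
    (hh : Integrable h) (hsp : Integrable fun x ↦ ‖x‖ ^ (-α) • h x)
    (hfr : Integrable fun ξ ↦ ‖ξ‖ ^ (α - finrank ℝ V) • 𝓕 h ξ) :
    rieszGamma α • ∫ x, ‖x‖ ^ (-α) • h x =
      rieszGamma (finrank ℝ V - α) • ∫ ξ, ‖ξ‖ ^ (α - finrank ℝ V) • 𝓕 h ξ := by
  have : Nontrivial V := nontrivial_of_finrank_pos (R := ℝ) (by exact_mod_cast hα.trans hαd)
  have hexp : α - finrank ℝ V = -(finrank ℝ V - α) := by ring
  rw [hexp] at hfr ⊢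
  have hFh : AEStronglyMeasurable (𝓕 h) :=
    (VectorFourier.fourierIntegral_continuous Real.continuous_fourierChar
      continuous_inner hh).aestronglyMeasurable
  rw [rieszGamma_smul_integral_rpow_norm_smul hα hh.aestronglyMeasurable hsp,
    rieszGamma_smul_integral_rpow_norm_smul (sub_pos.2 hαd) hFh hfr,
    ← integral_comp_rpow_Ioi _ (neg_ne_zero.2 one_ne_zero)]
  refine setIntegral_congr_fun measurableSet_Ioi fun s (hs : 0 < s) ↦ ?_
  simp only [abs_neg, abs_one, one_mul, rpow_neg_one, smul_smul]
  rw [integral_gaussian_smul_eq_fourier (inv_pos.2 hs) hh, inv_inv, smul_smul, inv_rpow hs.le,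
    inv_rpow hs.le, ← rpow_neg hs.le, ← rpow_neg hs.le, ← rpow_add hs, ← rpow_add hs]
  congr 2
  ring

end Riesz

section Correlation

variable {G : Type*} [AddCommGroup G] [MeasurableSpace G] {μ : Measure G} {k : G → ℝ} {f g : G → ℂ}

lemma smul_convolution_comp_neg (u : G) :
    k u • (f ⋆[ContinuousLinearMap.mul ℂ ℂ, μ] (fun y ↦ g (-y))) u =
      ∫ x, k u • (f x * g (x - u)) ∂μ := by
  simp [convolution, integral_const_mul]

variable [MeasurableAdd₂ G] [MeasurableNeg G] [SFinite μ] [μ.IsAddLeftInvariant] [μ.IsNegInvariant]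

lemma measurePreserving_prod_sub_left :
    MeasurePreserving (fun p : G × G ↦ (p.1, p.1 - p.2)) (μ.prod μ) (μ.prod μ) :=
  (MeasurePreserving.id μ).skew_product measurable_sub
    (ae_of_all _ fun x ↦ (Measure.measurePreserving_sub_left μ x).map_eq)

lemma integrable_smul_mul_sub
    (hint : Integrable (fun p : G × G ↦ k (p.1 - p.2) • (f p.1 * g p.2)) (μ.prod μ)) :
    Integrable (fun p : G × G ↦ k p.2 • (f p.1 * g (p.1 - p.2))) (μ.prod μ) := by
  simpa [Function.comp_def] using measurePreserving_prod_sub_left.integrable_comp_of_integrable hint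

lemma integrable_smul_convolution_comp_neg
    (hint : Integrable (fun p : G × G ↦ k (p.1 - p.2) • (f p.1 * g p.2)) (μ.prod μ)) :
    Integrable (fun u ↦ k u • (f ⋆[ContinuousLinearMap.mul ℂ ℂ, μ] (fun y ↦ g (-y))) u) μ := by
  simpa only [smul_convolution_comp_neg] using (integrable_smul_mul_sub hint).integral_prod_right

lemma integral_smul_convolution_comp_neg
    (hint : Integrable (fun p : G × G ↦ k (p.1 - p.2) • (f p.1 * g p.2)) (μ.prod μ)) :
    ∫ u, k u • (f ⋆[ContinuousLinearMap.mul ℂ ℂ, μ] (fun y ↦ g (-y))) u ∂μ =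
      ∫ x, ∫ y, k (x - y) • (f x * g y) ∂μ ∂μ := by
  simp only [smul_convolution_comp_neg]
  rw [← integral_integral_swap (integrable_smul_mul_sub hint)]
  refine integral_congr_ae (ae_of_all _ fun x ↦ ?_)
  simpa using integral_sub_left_eq_self (fun y ↦ k (x - y) • (f x * g y)) μ x

end Correlation

section Integrability

variable {V E : Type*} [NormedAddCommGroup V] [NormedSpace ℝ V] [FiniteDimensional ℝ V]
  [MeasurableSpace V] [BorelSpace V] {μ : Measure V} [μ.IsAddHaarMeasure]
  [NormedAddCommGroup E] [NormedSpace ℝ E] {α C : ℝ}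

lemma exists_rpow_norm_eq_integrable_add_bounded (μ : Measure V) [μ.IsAddHaarMeasure]
    (hα : 0 ≤ α) (hαd : α < finrank ℝ V) :
    ∃ k₁ k₂ : V → ℝ, Integrable k₁ μ ∧ Measurable k₂ ∧ (∀ x, ‖k₂ x‖ ≤ 1) ∧
      ∀ x, ‖x‖ ^ (-α) = k₁ x + k₂ x := by
  have hmeas : Measurable fun x : V ↦ ‖x‖ ^ (-α) := by fun_prop
  have hball : IntegrableOn (fun x : V ↦ ‖x‖ ^ (-α)) (Metric.ball 0 1) μ :=
    integrableOn_ball_of_norm_le_rpow (C := 1) (by exact_mod_cast hα.trans_lt hαd) hαd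
      (ae_of_all _ fun x ↦ by rw [one_mul, norm_of_nonneg (by positivity)])
      hmeas.aestronglyMeasurable
  refine ⟨_, (Metric.ball 0 1)ᶜ.indicator fun x ↦ ‖x‖ ^ (-α),
    hball.integrable_indicator measurableSet_ball, hmeas.indicator measurableSet_ball.compl,
    fun x ↦ ?_, fun x ↦ (congrFun (indicator_self_add_compl _ fun x : V ↦ ‖x‖ ^ (-α)) x).symm⟩
  rcases lt_or_ge ‖x‖ 1 with hx | hx
  · simp [hx]
  · simpa [hx, abs_of_nonneg (rpow_nonneg (norm_nonneg x) _)] using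
      rpow_le_one_of_one_le_of_nonpos hx (neg_nonpos.2 hα)

lemma integrable_rpow_norm_smul {F : V → E} (hα : 0 ≤ α) (hαd : α < finrank ℝ V)
    (hF : Integrable F μ) (hFC : ∀ x, ‖F x‖ ≤ C) :
    Integrable (fun x ↦ ‖x‖ ^ (-α) • F x) μ := by
  obtain ⟨k₁, k₂, hk₁, hk₂_meas, hk₂, hk⟩ := exists_rpow_norm_eq_integrable_add_bounded μ hα hαd
  simp only [hk, add_smul]
  exact (hk₁.smul_bdd C hF.aestronglyMeasurable (ae_of_all _ hFC)).add
    (hF.bdd_smul 1 hk₂_meas.aestronglyMeasurable (ae_of_all _ hk₂))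

lemma integrable_rpow_norm_sub_smul_mul {f g : V → ℂ} (hα : 0 ≤ α) (hαd : α < finrank ℝ V)
    (hf : Integrable f μ) (hfC : ∀ x, ‖f x‖ ≤ C) (hg : Integrable g μ) :
    Integrable (fun p : V × V ↦ ‖p.1 - p.2‖ ^ (-α) • (f p.1 * g p.2)) (μ.prod μ) := by
  obtain ⟨k₁, k₂, hk₁, hk₂_meas, hk₂, hk⟩ := exists_rpow_norm_eq_integrable_add_bounded μ hα hαd
  simp only [hk, add_smul]
  have hbounded : Integrable (fun p : V × V ↦ k₂ (p.1 - p.2) • (f p.1 * g p.2)) (μ.prod μ) :=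
    (hf.mul_prod hg).bdd_smul 1 (hk₂_meas.comp measurable_sub).aestronglyMeasurable
      (ae_of_all _ fun p ↦ hk₂ _)
  have hconv : Integrable (fun p : V × V ↦ k₁ (p.1 - p.2) • g p.2) (μ.prod μ) :=
    hg.convolution_integrand (ContinuousLinearMap.lsmul ℝ ℝ).flip hk₁
  have hintegrable := hconv.bdd_mul hf.aestronglyMeasurable.comp_fst (ae_of_all _ fun p ↦ hfC p.1)
  simp only [mul_smul_comm] at hintegrable
  exact hintegrable.add hbounded

end Integrability

section RieszEnergy

variable {V : Type*} [NormedAddCommGroup V] [InnerProductSpace ℝ V] [FiniteDimensional ℝ V]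
  [MeasurableSpace V] [BorelSpace V] {f g : V → ℂ} {α C : ℝ}

lemma fourier_convolution_comp_neg (hf : Integrable f) (hg : Integrable g) (ξ : V) :
    𝓕 (f ⋆[ContinuousLinearMap.mul ℂ ℂ] (fun y ↦ g (-y))) ξ = 𝓕 f ξ * 𝓕⁻ g ξ := by
  rw [Real.fourier_mul_convolution_eq hf hg.comp_neg, Real.fourierInv_eq_fourier_comp_neg]

lemma norm_fourier_mul_fourierInv_le (f g : V → ℂ) (ξ : V) :
    ‖𝓕 f ξ * 𝓕⁻ g ξ‖ ≤ (∫ x, ‖f x‖) * ∫ x, ‖g x‖ := by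
  rw [norm_mul, Real.fourierInv_eq_fourier_neg]
  gcongr <;> exact VectorFourier.norm_fourierIntegral_le_integral_norm ..

theorem rieszGamma_smul_integral_integral_eq_fourier (hα : 0 < α) (hαd : α < finrank ℝ V)
    (hf : Integrable f) (hfC : ∀ x, ‖f x‖ ≤ C) (hg : Integrable g)
    (hfg : Integrable fun ξ ↦ 𝓕 f ξ * 𝓕⁻ g ξ) :
    rieszGamma α • ∫ x, ∫ y, ‖x - y‖ ^ (-α) • (f x * g y) =
      rieszGamma (finrank ℝ V - α) • ∫ ξ, ‖ξ‖ ^ (α - finrank ℝ V) • (𝓕 f ξ * 𝓕⁻ g ξ) := by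
  have hsp := integrable_rpow_norm_sub_smul_mul hα.le hαd hf hfC hg
  have hfr := integrable_rpow_norm_smul (sub_nonneg.2 hαd.le) (sub_lt_self _ hα) hfg
    (norm_fourier_mul_fourierInv_le f g)
  rw [neg_sub] at hfr
  rw [← integral_smul_convolution_comp_neg (k := fun x ↦ ‖x‖ ^ (-α)) hsp]
  simp only [← fourier_convolution_comp_neg hf hg] at hfr ⊢
  exact rieszGamma_smul_integral_rpow_norm_smul_eq_fourier hα hαd
    (hf.integrable_convolution _ hg.comp_neg) (integrable_smul_convolution_comp_neg hsp) hfr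

end RieszEnergy

section Sinc

lemma sinc_mul_self (x : ℝ) : x * sinc x = sin x := by
  rcases eq_or_ne x 0 with rfl | hx
  · simp
  · rw [sinc_of_ne_zero hx, mul_div_cancel₀ _ hx]

lemma sinc_sq_le_two_mul_inv_one_add_sq (x : ℝ) : sinc x ^ 2 ≤ 2 * (1 + x ^ 2)⁻¹ := by
  rw [← div_eq_mul_inv, le_div_iff₀ (by positivity)]
  calc sinc x ^ 2 * (1 + x ^ 2) = sinc x ^ 2 + sin x ^ 2 := by rw [← sinc_mul_self x]; ring
    _ ≤ 1 + 1 := add_le_add ((sq_le_one_iff_abs_le_one _).2 (abs_sinc_le_one x)) (sin_sq_le_one x)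
    _ = 2 := one_add_one_eq_two

lemma integrable_sinc_sq : Integrable fun x ↦ sinc x ^ 2 :=
  (integrable_inv_one_add_sq.const_mul 2).mono' (continuous_sinc.pow 2).aestronglyMeasurable
    (ae_of_all _ fun x ↦ by
      simpa only [norm_of_nonneg (sq_nonneg _)] using sinc_sq_le_two_mul_inv_one_add_sq x)

end Sinc

lemma integral_rpow_abs_smul_comp_mul_left {E : Type*} [NormedAddCommGroup E] [NormedSpace ℝ E]
    {c : ℝ} (hc : 0 < c) (β : ℝ) (f : ℝ → E) :
    ∫ ξ, |ξ| ^ β • f (c * ξ) = c ^ (-β - 1) • ∫ ξ, |ξ| ^ β • f ξ := by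
  have hpow (ξ : ℝ) : |ξ| ^ β = c ^ (-β) * |c * ξ| ^ β := by
    rw [abs_mul, abs_of_pos hc, mul_rpow hc.le (abs_nonneg ξ), ← mul_assoc, ← rpow_add hc,
      neg_add_cancel, rpow_zero, one_mul]
  calc ∫ ξ, |ξ| ^ β • f (c * ξ) = ∫ ξ, c ^ (-β) • |c * ξ| ^ β • f (c * ξ) := by
        simp only [smul_smul, ← hpow]
    _ = c ^ (-β - 1) • ∫ ξ, |ξ| ^ β • f ξ := by
        rw [integral_smul, Measure.integral_comp_mul_left (fun η ↦ |η| ^ β • f η), smul_smul,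
          abs_of_pos (inv_pos.2 hc), rpow_sub_one hc.ne', div_eq_mul_inv]

section Wave

variable {t θ w α : ℝ}

lemma waveG_eq_indicator (t : ℝ) : waveG t = (Icc (-t) t).indicator fun _ ↦ 1 / 2 := by
  ext x
  simp [waveG, indicator, abs_le]

lemma waveG_neg (t x : ℝ) : waveG t (-x) = waveG t x := by
  simp [waveG]

lemma abs_waveG_le (t x : ℝ) : |waveG t x| ≤ 1 / 2 := by
  unfold waveG
  split_ifs <;> norm_num

lemma integrable_ofReal_waveG (t : ℝ) : Integrable fun x ↦ (waveG t x : ℂ) := by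
  rw [waveG_eq_indicator]
  exact ((integrableOn_const (by simp)).integrable_indicator measurableSet_Icc).ofReal

lemma fourier_waveG (ht : 0 ≤ t) (ξ : ℝ) :
    𝓕 (fun x ↦ (waveG t x : ℂ)) ξ = t * sinc (t * (2 * π * ξ)) := by
  have hinterval : 𝓕 (fun x ↦ (waveG t x : ℂ)) ξ =
      1 / 2 * ∫ x in -t..t, Complex.exp (↑(-(2 * π * ξ) * x) * Complex.I) := by
    rw [fourier_real_eq_integral_exp_smul, intervalIntegral.integral_of_le (by linarith),
      ← integral_Icc_eq_integral_Ioc, ← integral_const_mul, ← integral_indicator measurableSet_Icc,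
      waveG_eq_indicator]
    congr with x
    by_cases hx : x ∈ Icc (-t) t
    · simp [hx, mul_comm, mul_left_comm]
    · simp [hx]
  rw [hinterval]
  rcases eq_or_ne ξ 0 with rfl | hξ
  · simp [← two_mul]
  · have hc : -(2 * π * ξ) ≠ 0 := neg_ne_zero.2 (by positivity)
    have hscale := intervalIntegral.smul_integral_comp_mul_left (a := -t) (b := t)
      (fun x : ℝ ↦ Complex.exp (x * Complex.I)) (-(2 * π * ξ))
    rw [mul_neg, integral_exp_mul_I_eq_sinc] at hscale
    refine mul_left_cancel₀ (Complex.ofReal_ne_zero.2 hc) ?_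
    rw [mul_left_comm, ← Complex.real_smul (x := -(2 * π * ξ)), hscale, neg_mul, sinc_neg]
    push_cast
    ring_nf

lemma Ifun_eq_convolution (hθ : 0 ≤ θ) (t : ℝ) :
    (fun y ↦ (Ifun t θ y : ℂ)) = (fun x ↦ (2 * waveG θ x : ℂ)) ⋆[ContinuousLinearMap.mul ℂ ℂ]
      (fun x ↦ (waveG t x : ℂ)) := by
  ext y
  rw [Ifun, intervalIntegral.integral_of_le (by linarith), ← integral_Icc_eq_integral_Ioc,
    ← integral_indicator measurableSet_Icc, ← integral_complex_ofReal, convolution,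
    waveG_eq_indicator θ]
  congr with x
  by_cases hx : x ∈ Icc (-θ) θ
  · simp [hx, ← waveG_neg t (y - x)]
  · simp [hx]

lemma norm_ofReal_Ifun_le (t θ y : ℝ) : ‖(Ifun t θ y : ℂ)‖ ≤ |θ| := by
  have hbound := intervalIntegral.norm_integral_le_of_norm_le_const (a := -θ) (b := θ)
    (f := fun x ↦ waveG t (x - y)) fun x _ ↦ abs_waveG_le t (x - y)
  rw [Complex.norm_real]
  refine hbound.trans_eq ?_
  rw [sub_neg_eq_add, ← two_mul, abs_mul, abs_two]
  ring

lemma integrable_ofReal_Ifun (hθ : 0 ≤ θ) (t : ℝ) : Integrable fun y ↦ (Ifun t θ y : ℂ) := by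
  rw [Ifun_eq_convolution hθ]
  exact ((integrable_ofReal_waveG θ).const_mul 2).integrable_convolution _
    (integrable_ofReal_waveG t)

lemma fourier_Ifun (ht : 0 ≤ t) (hθ : 0 ≤ θ) (ξ : ℝ) :
    𝓕 (fun y ↦ (Ifun t θ y : ℂ)) ξ =
      (2 * θ * t * sinc (θ * (2 * π * ξ)) * sinc (t * (2 * π * ξ)) : ℝ) := by
  have htwo : 𝓕 (fun x ↦ (2 * waveG θ x : ℂ)) ξ = 2 * 𝓕 (fun x ↦ (waveG θ x : ℂ)) ξ := by
    simp only [fourier_real_eq_integral_exp_smul, smul_eq_mul, mul_left_comm _ (2 : ℂ),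
      integral_const_mul]
  rw [Ifun_eq_convolution hθ, Real.fourier_mul_convolution_eq
    ((integrable_ofReal_waveG θ).const_mul 2) (integrable_ofReal_waveG t), htwo,
    fourier_waveG ht, fourier_waveG hθ]
  push_cast
  ring

lemma fourierInv_Ifun (ht : 0 ≤ t) (hθ : 0 ≤ θ) (ξ : ℝ) :
    𝓕⁻ (fun y ↦ (Ifun t θ y : ℂ)) ξ =
      (2 * θ * t * sinc (θ * (2 * π * ξ)) * sinc (t * (2 * π * ξ)) : ℝ) := by
  simp only [Real.fourierInv_eq_fourier_neg, fourier_Ifun ht hθ, mul_neg, sinc_neg]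

lemma fourier_mul_fourierInv_Ifun (ht : 0 ≤ t) (hθ : 0 ≤ θ) (hw : 0 ≤ w) (ξ : ℝ) :
    𝓕 (fun y ↦ (Ifun t θ y : ℂ)) ξ * 𝓕⁻ (fun z ↦ (Ifun t w z : ℂ)) ξ =
      (4 * θ * w * t ^ 2 * (sinc (θ * (2 * π * ξ)) * sinc (w * (2 * π * ξ)) *
        sinc (t * (2 * π * ξ)) ^ 2) : ℝ) := by
  rw [fourier_Ifun ht hθ, fourierInv_Ifun ht hw]
  push_cast
  ring

lemma integrable_sinc_mul_sinc_mul_sinc_sq (θ w : ℝ) (ht : t ≠ 0) :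
    Integrable fun ξ ↦ sinc (θ * ξ) * sinc (w * ξ) * sinc (t * ξ) ^ 2 := by
  have hcont : Continuous fun ξ ↦ sinc (θ * ξ) * sinc (w * ξ) := by
    have := continuous_sinc
    fun_prop
  refine (integrable_sinc_sq.comp_mul_left' ht).bdd_mul (c := 1) hcont.aestronglyMeasurable
    (ae_of_all _ fun ξ ↦ ?_)
  rw [norm_mul]
  exact mul_le_one₀ (abs_sinc_le_one _) (norm_nonneg _) (abs_sinc_le_one _)

lemma rieszGamma_mul_integral_Ifun_eq_integral_sinc (ht : 0 < t) (hθ : 0 ≤ θ) (hw : 0 ≤ w)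
    (hα : 0 < α) (hα1 : α < 1) :
    rieszGamma α * ∫ y, ∫ z, Ifun t θ y * Ifun t w z * |y - z| ^ (-α) =
      rieszGamma (1 - α) * ∫ ξ, |ξ| ^ (α - 1) * (4 * θ * w * t ^ 2 *
        (sinc (θ * (2 * π * ξ)) * sinc (w * (2 * π * ξ)) * sinc (t * (2 * π * ξ)) ^ 2)) := by
  have hint : Integrable fun ξ ↦
      𝓕 (fun y ↦ (Ifun t θ y : ℂ)) ξ * 𝓕⁻ (fun z ↦ (Ifun t w z : ℂ)) ξ := by
    simp only [fourier_mul_fourierInv_Ifun ht.le hθ hw]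
    exact (((integrable_sinc_mul_sinc_mul_sinc_sq θ w ht.ne').comp_mul_left'
      two_pi_pos.ne').const_mul _).ofReal
  have henergy := rieszGamma_smul_integral_integral_eq_fourier (V := ℝ) hα
    (by simpa using hα1) (integrable_ofReal_Ifun hθ t) (norm_ofReal_Ifun_le t θ)
    (integrable_ofReal_Ifun hw t) hint
  simp only [fourier_mul_fourierInv_Ifun ht.le hθ hw, finrank_self, norm_eq_abs,
    Complex.real_smul, Nat.cast_one] at henergy
  norm_cast at henergy
  simpa only [mul_comm (|_ - _| ^ _)] using henergy

lemma rpow_abs_mul_sinc_eq_sin_mul_rpow_abs (t θ w α : ℝ) {ξ : ℝ} (hξ : ξ ≠ 0) :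
    |ξ| ^ (α - 1) * (4 * θ * w * t ^ 2 * (sinc (θ * ξ) * sinc (w * ξ) * sinc (t * ξ) ^ 2)) =
      4 * (sin (t * ξ) ^ 2 * sin (θ * ξ) * sin (w * ξ) * |ξ| ^ (α - 5)) := by
  have hpow : |ξ| ^ (α - 1) = ξ ^ 4 * |ξ| ^ (α - 5) := by
    rw [← Even.pow_abs (by decide), ← rpow_natCast, ← rpow_add (abs_pos.2 hξ)]
    ring_nf
  rw [hpow, ← sinc_mul_self (t * ξ), ← sinc_mul_self (θ * ξ), ← sinc_mul_self (w * ξ)]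
  ring

theorem rieszGamma_mul_integral_Ifun_eq_integral_sin (ht : 0 < t) (hθ : 0 ≤ θ) (hw : 0 ≤ w)
    (hα : 0 < α) (hα1 : α < 1) :
    rieszGamma α * ∫ y, ∫ z, Ifun t θ y * Ifun t w z * |y - z| ^ (-α) =
      rieszGamma (1 - α) * ((2 * π) ^ (-α) * (4 *
        ∫ ξ, sin (t * ξ) ^ 2 * sin (θ * ξ) * sin (w * ξ) * |ξ| ^ (α - 5))) := by
  rw [rieszGamma_mul_integral_Ifun_eq_integral_sinc ht hθ hw hα hα1]
  have hscale := integral_rpow_abs_smul_comp_mul_left two_pi_pos (α - 1) fun ξ ↦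
    4 * θ * w * t ^ 2 * (sinc (θ * ξ) * sinc (w * ξ) * sinc (t * ξ) ^ 2)
  simp only [smul_eq_mul] at hscale
  rw [hscale, ← integral_const_mul 4]
  congr 2
  · ring_nf
  · refine integral_congr_ae ?_
    filter_upwards [Measure.ae_ne volume 0] with ξ hξ
    exact rpow_abs_mul_sinc_eq_sin_mul_rpow_abs t θ w α hξ

end Wave

/-- Plancherel-type computation: for `t > 0`, `H ∈ (1/2,1)` and `θ, w > 0`,
`α_H ∫∫ I_θ(y) I_w(z) |y-z|^{2H-2} dy dz
  = 4 c_H ∫ sin²(tξ) sin(θξ) sin(wξ) |ξ|^{-3-2H} dξ`,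
with `α_H = H(2H-1)` and `c_H = Γ(2H+1) sin(πH)/(2π)`. -/
theorem stmt_9 (t H : ℝ) (ht : 0 < t) (h1 : 1 / 2 < H) (h2 : H < 1)
    (θ w : ℝ) (hθ : 0 < θ) (hw : 0 < w) :
    H * (2 * H - 1) * ∫ y : ℝ, ∫ z : ℝ, Ifun t θ y * Ifun t w z * |y - z| ^ (2 * H - 2)
      = 4 * (Gamma (2 * H + 1) * Real.sin (π * H) / (2 * π)) *
        ∫ ξ : ℝ, Real.sin (t * ξ) ^ 2 * Real.sin (θ * ξ) * Real.sin (w * ξ)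
          * |ξ| ^ (-3 - 2 * H) := by
  have henergy := rieszGamma_mul_integral_Ifun_eq_integral_sin (α := 2 - 2 * H) ht hθ.le hw.le
    (by linarith) (by linarith)
  have hconst := mul_rieszGamma_two_mul_sub_one_eq_Gamma_mul_sin h1 h2
  rw [show 1 - (2 - 2 * H) = 2 * H - 1 by ring, show -(2 - 2 * H) = 2 * H - 2 by ring,
    show 2 - 2 * H - 5 = -3 - 2 * H by ring] at henergy
  refine mul_left_cancel₀ (rieszGamma_pos (s := 2 - 2 * H) (by linarith)).ne' ?_
  linear_combination (H * (2 * H - 1)) * henergy + (4 * ∫ ξ : ℝ, sin (t * ξ) ^ 2 * sin (θ * ξ) *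
    sin (w * ξ) * |ξ| ^ (-3 - 2 * H)) * hconst
end
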